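/- Suppose φ is entire on ℂ^n, belongs to the Fock space F(ℂ^n), and satisfies sup_{a∈ℝ^n} ∫_{ℂ^n} |φ(z+ia)|² e^{-|z|²/2} dz < ∞ together with sup_{y∈ℝ^n} ∫_{ℝ^n} |φ(x+iy)| e^{-|x|²/4} dx < ∞. Then there exists m ∈ L^∞(ℝ^n) with φ = Gm. -/

import Mathlib

open MeasureTheory Complex

/-!
Let `h(z) = e^{-z²/4} φ(z)`, and let `H` be the Fourier transform of `h` on the real plane. Moving
the plane of integration to height `y` shows that the horizontal slice `x ↦ h(x + iy)` has Fourier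
transform `e^{-y·ξ} H(ξ)`, while its `L¹` norm is at most `C e^{|y|²/4}`. Hence
`|H(ξ)| ≤ C e^{y·ξ + |y|²/4}` for every `y`, and `y = -2ξ` gives `|H(ξ)| ≤ C e^{-|ξ|²}`. Therefore
`m(ξ) = (2π)^{-n} e^{|ξ|²} H(ξ)` is bounded, and Fourier inversion on every horizontal slice says
that `φ` is its Gauss–Bargmann transform.
-/

section ShearedIntegrals

variable {α β E : Type*} [MeasurableSpace α] [MeasurableSpace β] [NormedAddCommGroup E]

lemma integrable_prod_of_integral_norm_le {ν : Measure α} [IsFiniteMeasure ν] {μ : Measure β}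
    [SFinite μ] {F : α × β → E} {C : ℝ} (hF : AEStronglyMeasurable F (ν.prod μ))
    (hint : ∀ᵐ a ∂ν, Integrable (fun b => F (a, b)) μ)
    (hC : ∀ᵐ a ∂ν, ∫ b, ‖F (a, b)‖ ∂μ ≤ C) : Integrable F (ν.prod μ) := by
  refine (integrable_prod_iff hF).2 ⟨hint, ?_⟩
  refine Integrable.of_bound hF.norm.integral_prod_right' C ?_
  filter_upwards [hC] with a ha
  rwa [Real.norm_of_nonneg (integral_nonneg fun _ => norm_nonneg _)]

lemma integrable_intervalIntegral [NormedSpace ℝ E] {μ : Measure β} [SFinite μ] {a b : ℝ}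
    {F : ℝ × β → E} (hF : Integrable F ((volume.restrict (Set.uIoc a b)).prod μ)) :
    Integrable (fun x => ∫ s in a..b, F (s, x)) μ := by
  simp only [intervalIntegral.intervalIntegral_eq_integral_uIoc]
  exact hF.integral_prod_right.smul _

variable {V : Type*} [NormedAddCommGroup V] [NormedSpace ℝ V] [MeasurableSpace V] [BorelSpace V]
  [SecondCountableTopology V] {μ : Measure V} [SFinite μ] [μ.IsAddRightInvariant]

lemma integrable_prod_comp_add_smul {f : V → E} (hf : Continuous f) (hfi : Integrable f μ) (v : V)
    (a b : ℝ) : Integrable (fun p : ℝ × V => f (p.2 + p.1 • v))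
      ((volume.restrict (Set.uIoc a b)).prod μ) := by
  have hcont : Continuous fun p : ℝ × V => f (p.2 + p.1 • v) := by fun_prop
  have : IsFiniteMeasure (volume.restrict (Set.uIoc a b)) := by
    rw [Set.uIoc]
    infer_instance
  exact integrable_prod_of_integral_norm_le hcont.aestronglyMeasurable
    (.of_forall fun s => hfi.comp_add_right (s • v))
    (.of_forall fun s => (integral_add_right_eq_self (fun x => ‖f x‖) (s • v)).le)

variable [NormedSpace ℝ E] [CompleteSpace E]

lemma integral_intervalIntegral_comp_add_smul {f : V → E} (hf : Continuous f)
    (hfi : Integrable f μ) (v : V) (a b : ℝ) :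
    ∫ x, (∫ s in a..b, f (x + s • v)) ∂μ = (b - a) • ∫ x, f x ∂μ := by
  rw [← intervalIntegral_integral_swap (integrable_prod_comp_add_smul hf hfi v a b)]
  simp only [integral_add_right_eq_self, intervalIntegral.integral_const]

end ShearedIntegrals

section HorizontalSlice

variable {ι E : Type*}

/-- The restriction `x ↦ g (x + iy)` of a function on `ℂ^ι` to the horizontal real plane at
height `y`. -/
def horizontalSlice (g : (ι → ℂ) → E) (y x : ι → ℝ) : E :=
  g fun j => (x j : ℂ) + I * (y j : ℂ)

lemma horizontalSlice_im_re (g : (ι → ℂ) → E) (z : ι → ℂ) :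
    horizontalSlice g (fun j => (z j).im) (fun j => (z j).re) = g z := by
  simp only [horizontalSlice, mul_comm I, re_add_im]

variable [NormedAddCommGroup E] {g : (ι → ℂ) → E}

lemma continuous_horizontalSlice (hg : Continuous g) (y : ι → ℝ) :
    Continuous (horizontalSlice g y) :=
  hg.comp (by fun_prop)

lemma integrable_prod_horizontalSlice_smul [Fintype ι] (hg : Continuous g) {y : ι → ℝ} {C : ℝ}
    (hint : ∀ t ∈ Set.Icc (0 : ℝ) 1, Integrable (horizontalSlice g (t • y)))
    (hC : ∀ t ∈ Set.Icc (0 : ℝ) 1, ∫ x, ‖horizontalSlice g (t • y) x‖ ≤ C) :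
    Integrable (fun p : ℝ × (ι → ℝ) => horizontalSlice g (p.1 • y) p.2)
      ((volume.restrict (Set.uIoc 0 1)).prod volume) := by
  have hcont : Continuous fun p : ℝ × (ι → ℝ) => horizontalSlice g (p.1 • y) p.2 :=
    hg.comp (by simp only [Pi.smul_apply]; fun_prop)
  rw [Set.uIoc_of_le zero_le_one]
  refine integrable_prod_of_integral_norm_le (C := C) hcont.aestronglyMeasurable ?_ ?_
  · filter_upwards [ae_restrict_mem measurableSet_Ioc] with t ht
    exact hint t (Set.Ioc_subset_Icc_self ht)
  · filter_upwards [ae_restrict_mem measurableSet_Ioc] with t ht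
    exact hC t (Set.Ioc_subset_Icc_self ht)

variable [NormedSpace ℂ E]

lemma intervalIntegral_horizontalSlice_boundary [Finite ι] (hg : Differentiable ℂ g) (x y : ι → ℝ) :
    (∫ s in (0 : ℝ)..1, horizontalSlice g 0 (x + s • y)) -
        (∫ s in (0 : ℝ)..1, horizontalSlice g y (x + s • y)) +
        I • (∫ t in (0 : ℝ)..1, horizontalSlice g (t • y) (x + y)) -
        I • (∫ t in (0 : ℝ)..1, horizontalSlice g (t • y) x) = 0 := by
  have := Fintype.ofFinite ι
  have hline : Differentiable ℂ fun w : ℂ => g fun j => (x j : ℂ) + w * (y j : ℂ) :=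
    hg.comp (by fun_prop)
  have key := integral_boundary_rect_eq_zero_of_differentiableOn _ 0 (1 + I) hline.differentiableOn
  simpa [horizontalSlice, add_mul, add_assoc, mul_assoc, mul_left_comm _ I] using key

variable [CompleteSpace E] [Fintype ι]

-- Integrate Cauchy's theorem for the rectangle `x + wy`, `w ∈ [0, 1] × [0, 1]`, over `x`: by
-- translation invariance the two vertical sides cancel, so no decay of `g` is needed.
theorem integral_horizontalSlice_eq_integral_horizontalSlice_zero (hg : Differentiable ℂ g)
    {y : ι → ℝ} {C : ℝ}
    (hint : ∀ t ∈ Set.Icc (0 : ℝ) 1, Integrable (horizontalSlice g (t • y)))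
    (hC : ∀ t ∈ Set.Icc (0 : ℝ) 1, ∫ x, ‖horizontalSlice g (t • y) x‖ ≤ C) :
    ∫ x, horizontalSlice g y x = ∫ x, horizontalSlice g 0 x := by
  have hcont := continuous_horizontalSlice hg.continuous
  have hint0 : Integrable (horizontalSlice g 0) := by simpa using hint 0 (by simp)
  have hint1 : Integrable (horizontalSlice g y) := by simpa using hint 1 (by simp)
  let bottom x := ∫ s in (0 : ℝ)..1, horizontalSlice g 0 (x + s • y)
  let top x := ∫ s in (0 : ℝ)..1, horizontalSlice g y (x + s • y)
  let side x := ∫ t in (0 : ℝ)..1, horizontalSlice g (t • y) x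
  have hbottom : Integrable bottom := integrable_intervalIntegral
    (integrable_prod_comp_add_smul (hcont 0) hint0 y 0 1)
  have hside : Integrable side := integrable_intervalIntegral
    (integrable_prod_horizontalSlice_smul hg.continuous hint hC)
  have hcauchy : top = bottom + I • (fun x => side (x + y) - side x) := by
    funext x
    have hrect : bottom x - top x + I • side (x + y) - I • side x = 0 :=
      intervalIntegral_horizontalSlice_boundary hg x y
    simp only [Pi.add_apply, Pi.smul_apply, smul_sub]
    rw [← sub_eq_zero, ← neg_eq_zero, ← hrect]
    abel
  have hside_cancel : ∫ x, (side (x + y) - side x) = 0 := by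
    rw [integral_sub (hside.comp_add_right y) hside, integral_add_right_eq_self, sub_self]
  calc ∫ x, horizontalSlice g y x
      = ∫ x, top x := by
        simp [top, integral_intervalIntegral_comp_add_smul (hcont y) hint1]
    _ = ∫ x, bottom x := by
        rw [hcauchy, integral_add' hbottom]
        · simp [integral_smul, hside_cancel]
        · exact ((hside.comp_add_right y).sub hside).smul I
    _ = ∫ x, horizontalSlice g 0 x := by
        simp [bottom, integral_intervalIntegral_comp_add_smul (hcont 0) hint0]

end HorizontalSlice

section Fourier

variable {ι E : Type*} [Fintype ι] [NormedAddCommGroup E] [NormedSpace ℂ E]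

/-- The Fourier transform on `ℝ^ι` in the angular-frequency normalization
`ξ ↦ ∫ e^{-ix·ξ} f(x) dx`, the one matching the exponentials of the Gauss–Bargmann transform. -/
noncomputable def angularFourier (f : (ι → ℝ) → E) : (ι → ℝ) → E :=
  VectorFourier.fourierIntegral Real.probChar volume (dotProductBilin ℝ ℝ) f

lemma angularFourier_apply (f : (ι → ℝ) → E) (ξ : ι → ℝ) :
    angularFourier f ξ = ∫ x, Real.probChar (-(x ⬝ᵥ ξ)) • f x :=
  rfl

lemma continuous_angularFourier {f : (ι → ℝ) → E} (hf : Integrable f) :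
    Continuous (angularFourier f) :=
  VectorFourier.fourierIntegral_continuous Real.continuous_probChar
    (by simp only [dotProductBilin_apply_apply]; fun_prop) hf

lemma norm_angularFourier_le (f : (ι → ℝ) → E) (ξ : ι → ℝ) :
    ‖angularFourier f ξ‖ ≤ ∫ x, ‖f x‖ :=
  VectorFourier.norm_fourierIntegral_le_integral_norm _ _ _ f ξ

lemma fourierChar_inner (v w : EuclideanSpace ℝ ι) :
    Real.fourierChar (inner ℝ v w) = Real.probChar (v.ofLp ⬝ᵥ (2 * Real.pi) • w.ofLp) := by
  ext
  rw [Real.fourierChar_apply, Real.probChar_apply, EuclideanSpace.inner_eq_star_dotProduct,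
    star_trivial, dotProduct_comm, dotProduct_smul, smul_eq_mul]

lemma fourier_comp_ofLp (f : (ι → ℝ) → E) (w : EuclideanSpace ℝ ι) :
    FourierTransform.fourier (fun v : EuclideanSpace ℝ ι => f v.ofLp) w =
      angularFourier f ((2 * Real.pi) • w.ofLp) := by
  rw [Real.fourier_eq, angularFourier_apply, ← (PiLp.volume_preserving_ofLp ι).integral_comp
    (MeasurableEquiv.toLp 2 _).symm.measurableEmbedding]
  simp only [← inner_neg_left, fourierChar_inner, WithLp.ofLp_neg, neg_dotProduct]

theorem angularFourier_inversion [CompleteSpace E] {f : (ι → ℝ) → E} (hf : Continuous f)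
    (hfi : Integrable f) (hF : Integrable (angularFourier f)) (x : ι → ℝ) :
    f x = ((2 * Real.pi) ^ Fintype.card ι)⁻¹ •
      ∫ ξ, Real.probChar (x ⬝ᵥ ξ) • angularFourier f ξ := by
  have hofLp := PiLp.volume_preserving_ofLp ι
  have hemb : MeasurableEmbedding (WithLp.ofLp : EuclideanSpace ℝ ι → ι → ℝ) :=
    (MeasurableEquiv.toLp 2 _).symm.measurableEmbedding
  let f' : EuclideanSpace ℝ ι → E := fun v => f v.ofLp
  have hf' : Continuous f' := hf.comp (PiLp.continuous_ofLp 2 _)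
  have hfi' : Integrable f' := (hofLp.integrable_comp_emb hemb).2 hfi
  have hF' : Integrable (FourierTransform.fourier f') := by
    rw [funext (fourier_comp_ofLp f)]
    exact (hofLp.integrable_comp_emb hemb).2 (hF.comp_smul Real.two_pi_pos.ne')
  calc f x
      = ∫ w : EuclideanSpace ℝ ι, Real.fourierChar (inner ℝ (WithLp.toLp 2 x) w) •
          angularFourier f ((2 * Real.pi) • w.ofLp) := by
        simp only [real_inner_comm _ (WithLp.toLp 2 x), ← fourier_comp_ofLp, ← Real.fourierInv_eq]
        exact (hfi'.fourierInv_fourier_eq hF' hf'.continuousAt).symm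
    _ = ∫ ξ : ι → ℝ, Real.probChar (x ⬝ᵥ (2 * Real.pi) • ξ) •
          angularFourier f ((2 * Real.pi) • ξ) := by
        rw [← hofLp.integral_comp hemb]
        simp only [fourierChar_inner]
    _ = ((2 * Real.pi) ^ Fintype.card ι)⁻¹ •
          ∫ ξ, Real.probChar (x ⬝ᵥ ξ) • angularFourier f ξ := by
        rw [Measure.integral_comp_smul volume
          (fun ξ => Real.probChar (x ⬝ᵥ ξ) • angularFourier f ξ),
          Module.finrank_fintype_fun_eq_card, abs_of_pos (by positivity)]

end Fourier

section FourierShift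

variable {ι E : Type*} [Fintype ι]

/-- The complex exponential `z ↦ e^{iz·ξ}` on `ℂ^ι` with real frequency `ξ`. -/
noncomputable def planeWave (ξ : ι → ℝ) (z : ι → ℂ) : ℂ :=
  exp (I * ∑ j, z j * (ξ j : ℂ))

lemma differentiable_planeWave (ξ : ι → ℝ) : Differentiable ℂ (planeWave ξ) := by
  unfold planeWave
  fun_prop

lemma horizontalSlice_planeWave (ξ y x : ι → ℝ) :
    horizontalSlice (planeWave ξ) y x = Real.exp (-(y ⬝ᵥ ξ)) * Real.probChar (x ⬝ᵥ ξ) := by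
  rw [horizontalSlice, planeWave, Real.probChar_apply, ofReal_exp, ← Complex.exp_add]
  simp only [dotProduct, add_mul, Finset.sum_add_distrib, mul_assoc, ← Finset.mul_sum]
  push_cast
  congr 1
  linear_combination (∑ j, (y j : ℂ) * ξ j) * I_sq

variable [NormedAddCommGroup E] [NormedSpace ℂ E] {h : (ι → ℂ) → E}

lemma horizontalSlice_planeWave_neg_smul (h : (ι → ℂ) → E) (ξ y x : ι → ℝ) :
    horizontalSlice (planeWave (-ξ) • h) y x =
      Real.exp (y ⬝ᵥ ξ) • Real.probChar (-(x ⬝ᵥ ξ)) • horizontalSlice h y x := by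
  change horizontalSlice (planeWave (-ξ)) y x • horizontalSlice h y x = _
  rw [horizontalSlice_planeWave, dotProduct_neg, dotProduct_neg, neg_neg, mul_smul, coe_smul,
    Circle.smul_def]

variable [CompleteSpace E]

theorem angularFourier_horizontalSlice (hh : Differentiable ℂ h) {y : ι → ℝ} {C : ℝ}
    (hint : ∀ t ∈ Set.Icc (0 : ℝ) 1, Integrable (horizontalSlice h (t • y)))
    (hC : ∀ t ∈ Set.Icc (0 : ℝ) 1, ∫ x, ‖horizontalSlice h (t • y) x‖ ≤ C) (ξ : ι → ℝ) :
    angularFourier (horizontalSlice h y) ξ =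
      Real.exp (-(y ⬝ᵥ ξ)) • angularFourier (horizontalSlice h 0) ξ := by
  have hshift : ∫ x, horizontalSlice (planeWave (-ξ) • h) y x =
      ∫ x, horizontalSlice (planeWave (-ξ) • h) 0 x := by
    refine integral_horizontalSlice_eq_integral_horizontalSlice_zero
      (C := Real.exp |y ⬝ᵥ ξ| * C)
      ((differentiable_planeWave (-ξ)).smul hh) (fun t ht => ?_) fun t ht => ?_
    · rw [funext (horizontalSlice_planeWave_neg_smul h ξ (t • y))]
      refine Integrable.smul _ ((VectorFourier.fourierIntegral_convergent_iff
        (L := dotProductBilin ℝ ℝ) Real.continuous_probChar ?_ ξ).2 (hint t ht))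
      simp only [dotProductBilin_apply_apply]
      fun_prop
    · simp only [horizontalSlice_planeWave_neg_smul, norm_smul, Circle.norm_smul,
        Real.norm_of_nonneg (Real.exp_pos _).le, integral_const_mul]
      have hexp : (t • y) ⬝ᵥ ξ ≤ |y ⬝ᵥ ξ| := by
        rw [smul_dotProduct, smul_eq_mul]
        refine (le_abs_self _).trans ?_
        rw [abs_mul, abs_of_nonneg ht.1]
        exact mul_le_of_le_one_left (abs_nonneg _) ht.2
      gcongr
      exact hC t ht
  simp only [horizontalSlice_planeWave_neg_smul, integral_smul, ← angularFourier_apply,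
    zero_dotProduct, Real.exp_zero, one_smul] at hshift
  rw [← hshift, smul_smul, ← Real.exp_add, neg_add_cancel, Real.exp_zero, one_smul]

theorem horizontalSlice_eq_integral_planeWave_smul (hh : Differentiable ℂ h) {y : ι → ℝ} {C : ℝ}
    (hint : ∀ t ∈ Set.Icc (0 : ℝ) 1, Integrable (horizontalSlice h (t • y)))
    (hC : ∀ t ∈ Set.Icc (0 : ℝ) 1, ∫ x, ‖horizontalSlice h (t • y) x‖ ≤ C)
    (hF : Integrable fun ξ => Real.exp (-(y ⬝ᵥ ξ)) • angularFourier (horizontalSlice h 0) ξ)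
    (x : ι → ℝ) :
    horizontalSlice h y x = ((2 * Real.pi) ^ Fintype.card ι)⁻¹ •
      ∫ ξ, horizontalSlice (planeWave ξ) y x • angularFourier (horizontalSlice h 0) ξ := by
  have hshift := angularFourier_horizontalSlice hh hint hC
  have hinty : Integrable (horizontalSlice h y) := by simpa using hint 1 (by simp)
  rw [angularFourier_inversion (continuous_horizontalSlice hh.continuous y) hinty
    (by rwa [funext hshift])]
  simp only [hshift, horizontalSlice_planeWave, mul_comm (Real.exp _ : ℂ), mul_smul, coe_smul,
    Circle.smul_def]

end FourierShift

section GaussBargmann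

open scoped BoundedContinuousFunction

variable {ι E : Type*} [Fintype ι] [NormedAddCommGroup E] [NormedSpace ℂ E] {φ : (ι → ℂ) → E}
  {C : ℝ}

/-- The Gauss–Bargmann transform
`Gm(z) = e^{z²/4} ∫ m(ξ) e^{-|ξ|²} e^{iz·ξ} dξ`, for vector-valued `m`. -/
noncomputable def gaussBargmann (m : (ι → ℝ) → E) (z : ι → ℂ) : E :=
  exp ((∑ j, z j ^ 2) / 4) • ∫ ξ, planeWave ξ z • Real.exp (-∑ j, ξ j ^ 2) • m ξ

/-- The function `e^{-z²/4} φ(z)`, which is the Fourier–Laplace integral of `m(ξ) e^{-|ξ|²}` when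
`φ` is the Gauss–Bargmann transform of `m`. -/
noncomputable def gaussianDamp (φ : (ι → ℂ) → E) (z : ι → ℂ) : E :=
  exp (-(∑ j, z j ^ 2) / 4) • φ z

/-- The Fourier transform of `e^{-x²/4} φ(x)` on the real plane. -/
noncomputable def dampedSpectrum (φ : (ι → ℂ) → E) : (ι → ℝ) → E :=
  angularFourier (horizontalSlice (gaussianDamp φ) 0)

/-- The inverse Gauss–Bargmann transform, obtained by Fourier inversion on the real plane. -/
noncomputable def invGaussBargmann (φ : (ι → ℂ) → E) (ξ : ι → ℝ) : E :=
  ((2 * Real.pi) ^ Fintype.card ι)⁻¹ • Real.exp (∑ j, ξ j ^ 2) • dampedSpectrum φ ξ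

/-- The horizontal slices of `φ` have `L¹` norm at most `C` for the Gaussian weight
`e^{-|x|²/4}`. Integrability is part of the condition, as the integral of a non-integrable function
is `0`. -/
def UniformGaussianL1Bound (φ : (ι → ℂ) → E) (C : ℝ) : Prop :=
  ∀ y : ι → ℝ,
    Integrable (fun x => ‖horizontalSlice φ y x‖ * Real.exp (-(∑ j, x j ^ 2) / 4)) ∧
    ∫ x, ‖horizontalSlice φ y x‖ * Real.exp (-(∑ j, x j ^ 2) / 4) ≤ C

lemma gaussBargmann_invGaussBargmann_apply (φ : (ι → ℂ) → E) (z : ι → ℂ) :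
    gaussBargmann (invGaussBargmann φ) z = exp ((∑ j, z j ^ 2) / 4) •
      ((2 * Real.pi) ^ Fintype.card ι)⁻¹ • ∫ ξ, planeWave ξ z • dampedSpectrum φ ξ := by
  have hcancel (r : ℝ) (v : E) : Real.exp (-r) • Real.exp r • v = v := by
    rw [smul_smul, ← Real.exp_add, neg_add_cancel, Real.exp_zero, one_smul]
  simp only [gaussBargmann, invGaussBargmann, smul_comm _ ((2 * Real.pi) ^ Fintype.card ι)⁻¹,
    hcancel, integral_smul]

lemma exp_smul_gaussianDamp (φ : (ι → ℂ) → E) (z : ι → ℂ) :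
    exp ((∑ j, z j ^ 2) / 4) • gaussianDamp φ z = φ z := by
  rw [gaussianDamp, smul_smul, ← Complex.exp_add, neg_div, add_neg_cancel, Complex.exp_zero,
    one_smul]

lemma differentiable_gaussianDamp (hφ : Differentiable ℂ φ) :
    Differentiable ℂ (gaussianDamp φ) := by
  unfold gaussianDamp
  fun_prop

lemma norm_horizontalSlice_gaussianDamp (φ : (ι → ℂ) → E) (y x : ι → ℝ) :
    ‖horizontalSlice (gaussianDamp φ) y x‖ = Real.exp ((∑ j, y j ^ 2) / 4) *
      (‖horizontalSlice φ y x‖ * Real.exp (-(∑ j, x j ^ 2) / 4)) := by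
  have hre : (-(∑ j, ((x j : ℂ) + I * (y j : ℂ)) ^ 2) / 4).re =
      (∑ j, y j ^ 2) / 4 + -(∑ j, x j ^ 2) / 4 := by
    rw [← ofReal_ofNat, div_ofReal_re, neg_re, re_sum]
    simp only [pow_two, mul_re, mul_im, add_re, add_im, ofReal_re, ofReal_im, I_re, I_im, zero_mul,
      one_mul, zero_add, add_zero, sub_zero, Finset.sum_sub_distrib]
    ring
  rw [horizontalSlice, gaussianDamp, norm_smul, Complex.norm_exp, hre, Real.exp_add,
    horizontalSlice]
  ring

namespace UniformGaussianL1Bound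

lemma integrable_horizontalSlice_gaussianDamp (hL1 : UniformGaussianL1Bound φ C)
    (hφ : Differentiable ℂ φ) (y : ι → ℝ) : Integrable (horizontalSlice (gaussianDamp φ) y) := by
  have hcont := continuous_horizontalSlice (differentiable_gaussianDamp hφ).continuous y
  rw [← integrable_norm_iff hcont.aestronglyMeasurable,
    funext (norm_horizontalSlice_gaussianDamp φ y)]
  exact (hL1 y).1.const_mul _

lemma continuous_dampedSpectrum (hL1 : UniformGaussianL1Bound φ C) (hφ : Differentiable ℂ φ) :
    Continuous (dampedSpectrum φ) :=
  continuous_angularFourier (hL1.integrable_horizontalSlice_gaussianDamp hφ 0)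

lemma continuous_invGaussBargmann (hL1 : UniformGaussianL1Bound φ C)
    (hφ : Differentiable ℂ φ) : Continuous (invGaussBargmann φ) := by
  have hcont : Continuous (dampedSpectrum φ) := hL1.continuous_dampedSpectrum hφ
  unfold invGaussBargmann
  fun_prop

lemma integral_norm_horizontalSlice_gaussianDamp_le (hL1 : UniformGaussianL1Bound φ C)
    (y : ι → ℝ) :
    ∫ x, ‖horizontalSlice (gaussianDamp φ) y x‖ ≤ Real.exp ((∑ j, y j ^ 2) / 4) * C := by
  simp only [norm_horizontalSlice_gaussianDamp, integral_const_mul]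
  exact mul_le_mul_of_nonneg_left (hL1 y).2 (Real.exp_pos _).le

lemma integral_norm_horizontalSlice_smul_gaussianDamp_le (hL1 : UniformGaussianL1Bound φ C)
    (y : ι → ℝ) {t : ℝ} (ht : t ∈ Set.Icc (0 : ℝ) 1) :
    ∫ x, ‖horizontalSlice (gaussianDamp φ) (t • y) x‖ ≤
      Real.exp ((∑ j, y j ^ 2) / 4) * C := by
  have hC : 0 ≤ C := (integral_nonneg fun _ => by positivity).trans (hL1 0).2
  refine (hL1.integral_norm_horizontalSlice_gaussianDamp_le (t • y)).trans ?_
  simp only [Pi.smul_apply, smul_eq_mul, mul_pow]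
  gcongr
  exact mul_le_of_le_one_left (sq_nonneg _) (pow_le_one₀ ht.1 ht.2)

variable [CompleteSpace E]

lemma norm_dampedSpectrum_le (hL1 : UniformGaussianL1Bound φ C) (hφ : Differentiable ℂ φ)
    (ξ : ι → ℝ) : ‖dampedSpectrum φ ξ‖ ≤ Real.exp (-∑ j, ξ j ^ 2) * C := by
  let y : ι → ℝ := (-2 : ℝ) • ξ
  have hshift : angularFourier (horizontalSlice (gaussianDamp φ) y) ξ =
      Real.exp (-(y ⬝ᵥ ξ)) • dampedSpectrum φ ξ :=
    angularFourier_horizontalSlice (differentiable_gaussianDamp hφ)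
      (fun t _ => hL1.integrable_horizontalSlice_gaussianDamp hφ (t • y))
      (fun _ => hL1.integral_norm_horizontalSlice_smul_gaussianDamp_le y) ξ
  have hexponent : y ⬝ᵥ ξ + (∑ j, y j ^ 2) / 4 = -∑ j, ξ j ^ 2 := by
    simp only [y, dotProduct, Pi.smul_apply, smul_eq_mul, Finset.sum_div,
      ← Finset.sum_add_distrib, ← Finset.sum_neg_distrib]
    exact Finset.sum_congr rfl fun j _ => by ring
  calc ‖dampedSpectrum φ ξ‖
      = Real.exp (y ⬝ᵥ ξ) * ‖angularFourier (horizontalSlice (gaussianDamp φ) y) ξ‖ := by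
        rw [hshift, norm_smul, Real.norm_of_nonneg (Real.exp_pos _).le, ← mul_assoc,
          ← Real.exp_add, add_neg_cancel, Real.exp_zero, one_mul]
    _ ≤ Real.exp (y ⬝ᵥ ξ) * (Real.exp ((∑ j, y j ^ 2) / 4) * C) := by
        gcongr
        exact (norm_angularFourier_le _ ξ).trans
          (hL1.integral_norm_horizontalSlice_gaussianDamp_le y)
    _ = Real.exp (-∑ j, ξ j ^ 2) * C := by rw [← mul_assoc, ← Real.exp_add, hexponent]

lemma integrable_exp_smul_dampedSpectrum (hL1 : UniformGaussianL1Bound φ C)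
    (hφ : Differentiable ℂ φ) (y : ι → ℝ) :
    Integrable fun ξ => Real.exp (-(y ⬝ᵥ ξ)) • dampedSpectrum φ ξ := by
  have hgauss : Integrable fun ξ : ι → ℝ =>
      Real.exp (-(y ⬝ᵥ ξ)) * Real.exp (-∑ j, ξ j ^ 2) := by
    refine (GaussianFourier.integrable_cexp_neg_mul_sum_add (b := 1) one_pos
      fun j => -(y j : ℂ)).norm.congr (.of_forall fun ξ => ?_)
    simp [Complex.norm_exp, dotProduct, ← Real.exp_add, ← ofReal_pow, add_comm]
  have hcont : Continuous (dampedSpectrum φ) := hL1.continuous_dampedSpectrum hφ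
  refine (hgauss.mul_const C).mono' (Continuous.aestronglyMeasurable (by fun_prop))
    (.of_forall fun ξ => ?_)
  rw [norm_smul, Real.norm_of_nonneg (Real.exp_pos _).le, mul_assoc]
  exact mul_le_mul_of_nonneg_left (hL1.norm_dampedSpectrum_le hφ ξ) (Real.exp_pos _).le

theorem gaussBargmann_invGaussBargmann (hL1 : UniformGaussianL1Bound φ C)
    (hφ : Differentiable ℂ φ) : gaussBargmann (invGaussBargmann φ) = φ := by
  funext z
  have hinv : gaussianDamp φ z = ((2 * Real.pi) ^ Fintype.card ι)⁻¹ •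
      ∫ ξ, planeWave ξ z • dampedSpectrum φ ξ := by
    simpa only [horizontalSlice_im_re, dampedSpectrum] using
      horizontalSlice_eq_integral_planeWave_smul (differentiable_gaussianDamp hφ)
        (fun _ _ => hL1.integrable_horizontalSlice_gaussianDamp hφ _)
        (fun _ => hL1.integral_norm_horizontalSlice_smul_gaussianDamp_le _)
        (hL1.integrable_exp_smul_dampedSpectrum hφ fun j => (z j).im) fun j => (z j).re
  rw [gaussBargmann_invGaussBargmann_apply, ← hinv, exp_smul_gaussianDamp]

lemma norm_invGaussBargmann_le (hL1 : UniformGaussianL1Bound φ C) (hφ : Differentiable ℂ φ)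
    (ξ : ι → ℝ) : ‖invGaussBargmann φ ξ‖ ≤ ((2 * Real.pi) ^ Fintype.card ι)⁻¹ * C := by
  rw [invGaussBargmann, norm_smul, norm_smul, Real.norm_of_nonneg (by positivity),
    Real.norm_of_nonneg (Real.exp_pos _).le]
  gcongr
  calc Real.exp (∑ j, ξ j ^ 2) * ‖dampedSpectrum φ ξ‖
      ≤ Real.exp (∑ j, ξ j ^ 2) * (Real.exp (-∑ j, ξ j ^ 2) * C) := by
        gcongr
        exact hL1.norm_dampedSpectrum_le hφ ξ
    _ = C := by rw [← mul_assoc, ← Real.exp_add, add_neg_cancel, Real.exp_zero, one_mul]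

end UniformGaussianL1Bound

theorem gauss_bargmann_sufficiency_general [CompleteSpace E] (hφ : Differentiable ℂ φ)
    (hL1 : ∃ C, UniformGaussianL1Bound φ C) :
    ∃ m : (ι → ℝ) →ᵇ E, φ = gaussBargmann m := by
  obtain ⟨C, hC⟩ := hL1
  exact ⟨.ofNormedAddCommGroup _ (hC.continuous_invGaussBargmann hφ) _
    (hC.norm_invGaussBargmann_le hφ), (hC.gaussBargmann_invGaussBargmann hφ).symm⟩

end GaussBargmann

/-- sufficiency.  If `φ` is entire, lies in the Fock space, has
uniformly bounded `L²` norms along imaginary translates, and satisfies the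
stronger uniform `L¹` condition, then `φ = Gm` for some `m ∈ L^∞(ℝ^n)`. -/
theorem gauss_bargmann_sufficiency
    (n : ℕ) (φ : (Fin n → ℂ) → ℂ)
    (hent : Differentiable ℂ φ)
    (hfock : Integrable (fun z : Fin n → ℂ =>
      ‖φ z‖ ^ 2 * Real.exp (-(∑ j, ‖z j‖ ^ 2) / 2)))
    (hL2 : ∃ C : ℝ, ∀ a : Fin n → ℝ,
      Integrable (fun z : Fin n → ℂ =>
        ‖φ (fun j => z j + Complex.I * (a j : ℂ))‖ ^ 2 *
          Real.exp (-(∑ j, ‖z j‖ ^ 2) / 2)) ∧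
      (∫ z : Fin n → ℂ,
        ‖φ (fun j => z j + Complex.I * (a j : ℂ))‖ ^ 2 *
          Real.exp (-(∑ j, ‖z j‖ ^ 2) / 2)) ≤ C)
    (hL1 : ∃ C : ℝ, ∀ y : Fin n → ℝ,
      Integrable (fun x : Fin n → ℝ =>
        ‖φ (fun j => (x j : ℂ) + Complex.I * (y j : ℂ))‖ *
          Real.exp (-(∑ j, (x j) ^ 2) / 4)) ∧
      (∫ x : Fin n → ℝ,
        ‖φ (fun j => (x j : ℂ) + Complex.I * (y j : ℂ))‖ *
          Real.exp (-(∑ j, (x j) ^ 2) / 4)) ≤ C) :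
    ∃ m : (Fin n → ℝ) → ℂ, (∃ M : ℝ, ∀ ξ, ‖m ξ‖ ≤ M) ∧
      ∀ z : Fin n → ℂ, φ z =
        Complex.exp ((∑ j, (z j) ^ 2) / 4) *
          ∫ ξ : Fin n → ℝ, m ξ * (Real.exp (-∑ j, (ξ j) ^ 2) : ℂ) *
            Complex.exp (Complex.I * ∑ j, z j * (ξ j : ℂ)) := by
  obtain ⟨m, hm⟩ := gauss_bargmann_sufficiency_general hent hL1
  exact ⟨m, ⟨‖m‖, m.norm_coe_le_norm⟩, fun z => by
    simp only [hm, gaussBargmann, planeWave, real_smul, smul_eq_mul, mul_comm]⟩
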